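/- Every almost-planar graph has no minor isomorphic to any of the five graphs EX1, EX2, K33h, K5h, EX8; equivalently, each of these five graphs contains an edge e such that both the deletion and the contraction of e yield a nonplanar graph, so none of them is planar or almost-planar. -/

import Mathlib

open SimpleGraph

/-- `H` is a minor of `G` (branch-set / model definition). -/
def IsMinor {W V : Type*} (H : SimpleGraph W) (G : SimpleGraph V) : Prop :=
  ∃ B : W → Set V,
    (∀ w, (B w).Nonempty) ∧
    (∀ w, (G.induce (B w)).Connected) ∧
    (Pairwise fun w₁ w₂ => Disjoint (B w₁) (B w₂)) ∧
    (∀ ⦃w₁ w₂ : W⦄, H.Adj w₁ w₂ → ∃ v₁ ∈ B w₁, ∃ v₂ ∈ B w₂, G.Adj v₁ v₂)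

def K5 : SimpleGraph (Fin 5) := ⊤

def K33 : SimpleGraph (Fin 3 ⊕ Fin 3) := completeBipartiteGraph (Fin 3) (Fin 3)

/-- A graph is planar iff it has neither a `K₅` nor a `K₃,₃` minor (Wagner's theorem). -/
def Planar {V : Type*} (G : SimpleGraph V) : Prop := ¬ IsMinor K5 G ∧ ¬ IsMinor K33 G

/-- `G / uw`: contract the edge `uw`, merging `w` into `u` (the vertex `w` becomes isolated). -/
def contractEdge {V : Type*} (G : SimpleGraph V) (u w : V) : SimpleGraph V :=
  SimpleGraph.fromRel fun a b =>
    a ≠ w ∧ b ≠ w ∧ (G.Adj a b ∨ (a = u ∧ G.Adj w b) ∨ (b = u ∧ G.Adj a w))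

/-- A nonplanar graph is almost-planar if for every edge, deletion or contraction is planar. -/
def AlmostPlanar {V : Type*} (G : SimpleGraph V) : Prop :=
  ¬ Planar G ∧ ∀ ⦃u v : V⦄, G.Adj u v →
    (Planar (G.deleteEdges {s(u, v)}) ∨ Planar (contractEdge G u v))

/-- `G` is `k`-connected: more than `k` vertices and deleting fewer than `k` vertices
leaves a connected graph. -/
def KConnected {V : Type*} (G : SimpleGraph V) (k : ℕ) : Prop :=
  k < Nat.card V ∧ ∀ s : Set V, s.ncard < k → (G.induce (sᶜ)).Connected

/-- `{G[A], G[B]}` is a `k`-separation of `G`. -/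
def IsSep {V : Type*} (G : SimpleGraph V) (k : ℕ) (A B : Set V) : Prop :=
  A ∪ B = Set.univ ∧ A ≠ Set.univ ∧ B ≠ Set.univ ∧ (A ∩ B).ncard = k ∧
  ∀ ⦃x y : V⦄, G.Adj x y → (x ∈ A ∧ y ∈ A) ∨ (x ∈ B ∧ y ∈ B)

/-- The star `K_{1,3}`, with centre `0`. -/
def K13 : SimpleGraph (Fin 4) := SimpleGraph.fromRel fun a _ => a = 0

def InternallyFourConnected {V : Type*} (G : SimpleGraph V) : Prop :=
  KConnected G 3 ∧ 5 ≤ Nat.card V ∧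
  ∀ A B : Set V, IsSep G 3 A B →
    Xor' (Nonempty (G.induce A ≃g K13)) (Nonempty (G.induce B ≃g K13))

/-- The wheel `W_n`: a cycle of length `n` plus a hub (`none`) joined to all of it. -/
def wheelGraph (n : ℕ) : SimpleGraph (Option (Fin n)) :=
  SimpleGraph.fromRel fun a b =>
    match a, b with
    | some i, some j => j.val = (i.val + 1) % n
    | none, some _ => True
    | _, _ => False

def IsWheel {V : Type*} (G : SimpleGraph V) : Prop :=
  ∃ n, 3 ≤ n ∧ Nonempty (G ≃g wheelGraph n)

/-- The double wheel `DW_n`: a cycle of length `n` plus two adjacent hubs joined to all of it. -/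
def doubleWheel (n : ℕ) : SimpleGraph (Fin n ⊕ Fin 2) :=
  SimpleGraph.fromRel fun a b =>
    match a, b with
    | .inl i, .inl j => j.val = (i.val + 1) % n
    | .inl _, .inr _ => True
    | .inr _, .inr _ => True
    | _, _ => False

/-- The Möbius ladder `M_n`: a cycle of length `2n` plus all "opposite" chords. -/
def mobiusLadder (n : ℕ) : SimpleGraph (Fin (2 * n)) :=
  SimpleGraph.fromRel fun i j =>
    j.val = (i.val + 1) % (2 * n) ∨ j.val = (i.val + n) % (2 * n)

/-- `C²_m`: a cycle of length `m` plus all chords between vertices at distance two. -/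
def squareCycle (m : ℕ) : SimpleGraph (Fin m) :=
  SimpleGraph.fromRel fun i j =>
    j.val = (i.val + 1) % m ∨ j.val = (i.val + 2) % m

/-- The alternating double wheel `AW_{2n}`: a cycle of length `2n` plus two adjacent hubs,
each joined to alternating cycle vertices. -/
def altDoubleWheel (n : ℕ) : SimpleGraph (Fin (2 * n) ⊕ Fin 2) :=
  SimpleGraph.fromRel fun a b =>
    match a, b with
    | .inl i, .inl j => j.val = (i.val + 1) % (2 * n)
    | .inl i, .inr k => i.val % 2 = k.val
    | .inr _, .inr _ => True
    | _, _ => False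

/-- The class `𝒲`: three wheels glued along a common triangle `V₀`, with no other edges. -/
def InClassW {V : Type*} (G : SimpleGraph V) : Prop :=
  ∃ P : V → Fin 4,
    (P ⁻¹' {0}).ncard = 3 ∧
    (∀ x y : V, P x = 0 → P y = 0 → x ≠ y → G.Adj x y) ∧
    (∀ i : Fin 4, i ≠ 0 → IsWheel (G.induce {v | P v = 0 ∨ P v = i})) ∧
    (∀ ⦃x y : V⦄, G.Adj x y → ∃ i : Fin 4, i ≠ 0 ∧ (P x = 0 ∨ P x = i) ∧ (P y = 0 ∨ P y = i))

/-- `EX₁`: `K₃,₃` plus a vertex joined to all of one colour class. -/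
def EX1 : SimpleGraph (Option (Fin 3 ⊕ Fin 3)) :=
  SimpleGraph.fromRel fun a b =>
    match a, b with
    | some (.inl _), some (.inr _) => True
    | none, some (.inl _) => True
    | _, _ => False

/-- `EX₂`: `K₅` plus a vertex joined to three of its vertices. -/
def EX2 : SimpleGraph (Option (Fin 5)) :=
  SimpleGraph.fromRel fun a b =>
    match a, b with
    | some i, some j => i ≠ j
    | none, some j => j.val < 3
    | _, _ => False

/-- `EX₈`: `K₃,₃` plus a vertex joined to two vertices of one class and one of the other. -/
def EX8 : SimpleGraph (Option (Fin 3 ⊕ Fin 3)) :=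
  SimpleGraph.fromRel fun a b =>
    match a, b with
    | some (.inl _), some (.inr _) => True
    | none, some x => x = Sum.inl 0 ∨ x = Sum.inl 1 ∨ x = Sum.inr 0
    | _, _ => False

/-- `K₅ʰ`: subdivide the edges `01` and `02` of `K₅` and join the two subdivision vertices. -/
def K5h : SimpleGraph (Fin 5 ⊕ Fin 2) :=
  SimpleGraph.fromRel fun a b =>
    match a, b with
    | .inl i, .inl j =>
        i ≠ j ∧ ¬(i = 0 ∧ j = 1) ∧ ¬(i = 1 ∧ j = 0) ∧ ¬(i = 0 ∧ j = 2) ∧ ¬(i = 2 ∧ j = 0)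
    | .inl i, .inr k => (k = 0 ∧ (i = 0 ∨ i = 1)) ∨ (k = 1 ∧ (i = 0 ∨ i = 2))
    | .inr _, .inr _ => True
    | _, _ => False

/-- `K₃,₃ʰ`: subdivide two edges of `K₃,₃` at a common endpoint and join
the two subdivision vertices. -/
def K33h : SimpleGraph ((Fin 3 ⊕ Fin 3) ⊕ Fin 2) :=
  SimpleGraph.fromRel fun a b =>
    match a, b with
    | .inl (.inl i), .inl (.inr j) => ¬(i = 0 ∧ (j = 0 ∨ j = 1))
    | .inl (.inr j), .inl (.inl i) => ¬(i = 0 ∧ (j = 0 ∨ j = 1))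
    | .inl x, .inr k =>
        (k = 0 ∧ (x = Sum.inl 0 ∨ x = Sum.inr 0)) ∨ (k = 1 ∧ (x = Sum.inl 0 ∨ x = Sum.inr 1))
    | .inr _, .inr _ => True
    | _, _ => False

/-- `K₅⁺`: `K₅` plus a pendant vertex. -/
def K5plus : SimpleGraph (Option (Fin 5)) :=
  SimpleGraph.fromRel fun a b =>
    match a, b with
    | some i, some j => i ≠ j
    | none, some j => j = 0
    | _, _ => False

/-- `K₃,₃⁺`: `K₃,₃` plus a pendant vertex. -/
def K33plus : SimpleGraph (Option (Fin 3 ⊕ Fin 3)) :=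
  SimpleGraph.fromRel fun a b =>
    match a, b with
    | some (.inl _), some (.inr _) => True
    | none, some x => x = Sum.inl 0
    | _, _ => False

/-- `K₅ ⊕ e`: disjoint union of `K₅` and one edge. -/
def K5oplus : SimpleGraph (Fin 5 ⊕ Fin 2) :=
  SimpleGraph.fromRel fun a b =>
    match a, b with
    | .inl i, .inl j => i ≠ j
    | .inr _, .inr _ => True
    | _, _ => False

/-- `K₃,₃ ⊕ e`: disjoint union of `K₃,₃` and one edge. -/
def K33oplus : SimpleGraph ((Fin 3 ⊕ Fin 3) ⊕ Fin 2) :=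
  SimpleGraph.fromRel fun a b =>
    match a, b with
    | .inl (.inl _), .inl (.inr _) => True
    | .inr _, .inr _ => True
    | _, _ => False

/-- The triad addition of `H` at `x y z`: add a new vertex joined to `x`, `y`, `z`. -/
def triadAddition {U : Type*} (H : SimpleGraph U) (x y z : U) : SimpleGraph (Option U) :=
  SimpleGraph.fromRel fun a b =>
    match a, b with
    | some u, some v => H.Adj u v
    | none, some u => u = x ∨ u = y ∨ u = z
    | _, _ => False

def IsTriadAdditionOf {V U : Type*} (G : SimpleGraph V) (H : SimpleGraph U) : Prop :=
  ∃ x y z : U, x ≠ y ∧ y ≠ z ∧ x ≠ z ∧ Nonempty (G ≃g triadAddition H x y z)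

/-- `G` is obtained from `H` by subdividing (possibly repeatedly) edges of `H`,
all of which lie in `S`. -/
def IsSubdivisionWithin {V W : Type*} (G : SimpleGraph V) (H : SimpleGraph W)
    (S : Set (Sym2 W)) : Prop :=
  ∃ (f : W ↪ V) (p : ∀ ⦃u v : W⦄, H.Adj u v → G.Walk (f u) (f v)),
    (∀ ⦃u v : W⦄ (h : H.Adj u v), (p h).IsPath) ∧
    (∀ ⦃u v : W⦄ (h : H.Adj u v), p h.symm = (p h).reverse) ∧
    (∀ ⦃u v : W⦄ (h : H.Adj u v), s(u, v) ∉ S → (p h).length = 1) ∧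
    (∀ ⦃u v : W⦄ (h : H.Adj u v) (w : W), f w ∈ (p h).support → w = u ∨ w = v) ∧
    (∀ ⦃u v u' v' : W⦄ (h : H.Adj u v) (h' : H.Adj u' v'), s(u, v) ≠ s(u', v') →
      ∀ x : V, x ∈ (p h).support → x ∈ (p h').support → x ∈ Set.range f) ∧
    (∀ x : V, x ∈ Set.range f ∨ ∃ (u v : W) (h : H.Adj u v), x ∈ (p h).support) ∧
    (∀ e ∈ G.edgeSet, ∃ (u v : W) (h : H.Adj u v), e ∈ (p h).edges)

/-- `G` is a subdivision of `H`. -/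
def IsSubdivision {V W : Type*} (G : SimpleGraph V) (H : SimpleGraph W) : Prop :=
  IsSubdivisionWithin G H Set.univ

/-- `D(H)`: the set of edges of `H` whose deletion leaves a planar graph. -/
def Dset {U : Type*} (H : SimpleGraph U) : Set (Sym2 U) :=
  {e | e ∈ H.edgeSet ∧ Planar (H.deleteEdges {e})}

/-- `G[A]` together with all edges between vertices of `T` (`T ⊆ A` intended). -/
def deltaGraph {V : Type*} (G : SimpleGraph V) (A T : Set V) : SimpleGraph A :=
  SimpleGraph.fromRel fun a b => G.Adj a.1 b.1 ∨ (a.1 ∈ T ∧ b.1 ∈ T)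

/-- `G[A]^Y` for the separation `{G[A], G[B]}`: add a new vertex joined to `A ∩ B`. -/
def sepY {V : Type*} (G : SimpleGraph V) (A B : Set V) : SimpleGraph (Option A) :=
  SimpleGraph.fromRel fun x y =>
    match x, y with
    | some a, some b => G.Adj a.1 b.1
    | none, some a => a.1 ∈ A ∩ B
    | _, _ => False

/-- `G₂` is obtained from `G` by adding isolated vertices. -/
def AddIsolated {V₂ V : Type*} (G₂ : SimpleGraph V₂) (G : SimpleGraph V) : Prop :=
  ∃ f : V ↪ V₂, (∀ a b : V, G₂.Adj (f a) (f b) ↔ G.Adj a b) ∧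
    ∀ x : V₂, x ∉ Set.range f → ∀ y : V₂, ¬ G₂.Adj x y

/-- The set of non-isolated vertices of `G` (so `G* = G.induce (core G)`). -/
def core {V : Type*} (G : SimpleGraph V) : Set V := {v | ∃ w, G.Adj v w}

/-- `G` is obtained from `G'` by 3-summing wheels onto distinct triangles of `G'`. -/
def SumWheelsOnto {V U : Type*} (G : SimpleGraph V) (G' : SimpleGraph U) : Prop :=
  ∃ (g : U ↪ V) (k : ℕ) (Wp : Fin k → Set V) (T : Fin k → Set U),
    (∀ i, (T i).ncard = 3) ∧
    (∀ i, ∀ x ∈ T i, ∀ y ∈ T i, x ≠ y → G'.Adj x y) ∧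
    Function.Injective T ∧
    (∀ i, Disjoint (Wp i) (Set.range ⇑g)) ∧
    (Pairwise fun i j => Disjoint (Wp i) (Wp j)) ∧
    (Set.range ⇑g ∪ ⋃ i, Wp i) = Set.univ ∧
    (∀ i, IsWheel (deltaGraph G (Wp i ∪ ⇑g '' T i) (⇑g '' T i))) ∧
    (∀ a b : U, G.Adj (g a) (g b) → G'.Adj a b) ∧
    (∀ a b : U, G'.Adj a b → (G.Adj (g a) (g b) ∨ ∃ i, a ∈ T i ∧ b ∈ T i)) ∧
    (∀ ⦃x y : V⦄, G.Adj x y → (x ∈ Set.range ⇑g ∧ y ∈ Set.range ⇑g) ∨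
      ∃ i, x ∈ Wp i ∪ ⇑g '' T i ∧ y ∈ Wp i ∪ ⇑g '' T i) ∧
    (∀ i, ∀ x ∈ Wp i, ∀ ⦃y : V⦄, G.Adj x y → y ∈ Wp i ∪ ⇑g '' T i)

/-- `H` has an edge whose deletion and contraction are both nonplanar. -/
def HasBadEdge {V : Type*} (H : SimpleGraph V) : Prop :=
  ∃ u v : V, H.Adj u v ∧ ¬ Planar (H.deleteEdges {s(u, v)}) ∧ ¬ Planar (contractEdge H u v)

section Helpers

/-- A map sending adjacent vertices to mutually reachable ones preserves reachability. -/
lemma reachable_map_of_adj {V U : Type*} {G : SimpleGraph V} {K : SimpleGraph U} (φ : V → U)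
    (h : ∀ p q, G.Adj p q → K.Reachable (φ p) (φ q)) {p q : V} (hpq : G.Reachable p q) :
    K.Reachable (φ p) (φ q) := by
  obtain ⟨w⟩ := hpq
  induction w with
  | nil => exact Reachable.refl _
  | cons hadj _ ih => exact (h _ _ hadj).trans ih

lemma reachable_induce_mono {V : Type*} {G : SimpleGraph V} {s t : Set V} (hst : s ⊆ t)
    {a b : V} (ha : a ∈ s) (hb : b ∈ s) (h : (G.induce s).Reachable ⟨a, ha⟩ ⟨b, hb⟩) :
    (G.induce t).Reachable ⟨a, hst ha⟩ ⟨b, hst hb⟩ :=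
  h.map (induceHomOfLE G hst).toHom

lemma IsMinor.trans {W V U : Type*} {H : SimpleGraph W} {G : SimpleGraph V} {K : SimpleGraph U}
    (h₁ : IsMinor H G) (h₂ : IsMinor G K) : IsMinor H K := by
  obtain ⟨B, Bne, Bc, Bd, Ba⟩ := h₁
  obtain ⟨C, Cne, Cc, Cd, Ca⟩ := h₂
  have sub : ∀ w, ∀ v ∈ B w, C v ⊆ ⋃ v ∈ B w, C v := fun w v hv => Set.subset_biUnion_of_mem hv
  have ne : ∀ w, (⋃ v ∈ B w, C v).Nonempty := by
    intro w
    obtain ⟨v, hv⟩ := Bne w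
    exact (Cne v).mono (sub w v hv)
  refine ⟨fun w => ⋃ v ∈ B w, C v, ne, ?_, ?_, ?_⟩
  · intro w
    choose r hr using Cne
    have key : ∀ p q : B w, (K.induce (⋃ v ∈ B w, C v)).Reachable
        ⟨r p, sub w p p.2 (hr p)⟩ ⟨r q, sub w q q.2 (hr q)⟩ := by
      intro p q
      refine reachable_map_of_adj (G := G.induce (B w))
        (φ := fun p : B w => (⟨r p, sub w p p.2 (hr p)⟩ : (⋃ v ∈ B w, C v : Set U))) ?_
        ((Bc w).preconnected p q)
      intro p q hpq
      obtain ⟨x, hx, y, hy, hxy⟩ := Ca (show G.Adj p q from hpq)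
      have e1 := reachable_induce_mono (sub w p p.2) (hr p) hx ((Cc p).preconnected _ _)
      have e2 := reachable_induce_mono (sub w q q.2) hy (hr q) ((Cc q).preconnected _ _)
      have e3 : (K.induce (⋃ v ∈ B w, C v)).Adj ⟨x, sub w p p.2 hx⟩ ⟨y, sub w q q.2 hy⟩ := hxy
      exact e1.trans (e3.reachable.trans e2)
    have : Nonempty (⋃ v ∈ B w, C v : Set U) := (ne w).to_subtype
    refine ⟨?_⟩
    rintro ⟨x, hx⟩ ⟨y, hy⟩
    have hx2 := hx
    have hy2 := hy
    simp only [Set.mem_iUnion, exists_prop] at hx2 hy2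
    obtain ⟨p, hp, hxp⟩ := hx2
    obtain ⟨q, hq, hyq⟩ := hy2
    have e1 := reachable_induce_mono (sub w p hp) hxp (hr p) ((Cc p).preconnected _ _)
    have e2 := reachable_induce_mono (sub w q hq) (hr q) hyq ((Cc q).preconnected _ _)
    exact e1.trans ((key ⟨p, hp⟩ ⟨q, hq⟩).trans e2)
  · intro w₁ w₂ hw
    rw [Set.disjoint_left]
    intro x hx hy
    simp only [Set.mem_iUnion, exists_prop] at hx hy
    obtain ⟨p, hp, hxp⟩ := hx
    obtain ⟨q, hq, hxq⟩ := hy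
    by_cases hpq : p = q
    · subst hpq
      exact Set.disjoint_left.1 (Bd hw) hp hq
    · exact Set.disjoint_left.1 (Cd hpq) hxp hxq
  · intro w₁ w₂ hw
    obtain ⟨p, hp, q, hq, hpq⟩ := Ba hw
    obtain ⟨x, hx, y, hy, hxy⟩ := Ca hpq
    exact ⟨x, sub _ _ hp hx, y, sub _ _ hq hy, hxy⟩

lemma Planar.of_minor {W V : Type*} {H : SimpleGraph W} {G : SimpleGraph V}
    (h : IsMinor H G) (hG : Planar G) : Planar H :=
  ⟨fun h5 => hG.1 (h5.trans h), fun h3 => hG.2 (h3.trans h)⟩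

lemma induce_connected_congr {V : Type*} {G K : SimpleGraph V} {s : Set V}
    (h : ∀ x ∈ s, ∀ y ∈ s, G.Adj x y → K.Adj x y) (hc : (G.induce s).Connected) :
    (K.induce s).Connected :=
  hc.mono fun x y hxy => h x x.2 y y.2 hxy

/-- A criterion for minors: all branch sets are spanned by stars. -/
lemma isMinor_of_stars {W V : Type*} {H : SimpleGraph W} {G : SimpleGraph V}
    (f : V → Option W) (r : W → V) (hr : ∀ w, f (r w) = some w)
    (hs : ∀ v w, f v = some w → v = r w ∨ G.Adj (r w) v)
    (ha : ∀ w₁ w₂, H.Adj w₁ w₂ → ∃ v₁ v₂, f v₁ = some w₁ ∧ f v₂ = some w₂ ∧ G.Adj v₁ v₂) :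
    IsMinor H G := by
  refine ⟨fun w => {v | f v = some w}, fun w => ⟨r w, hr w⟩, ?_, ?_, ?_⟩
  · intro w
    have : Nonempty {v | f v = some w} := ⟨⟨r w, hr w⟩⟩
    have key : ∀ v : {v | f v = some w},
        (G.induce {v | f v = some w}).Reachable ⟨r w, hr w⟩ v := by
      rintro ⟨v, hv⟩
      rcases hs v w hv with h | h
      · subst h
        exact Reachable.refl _
      · have h2 : (G.induce {v | f v = some w}).Adj ⟨r w, hr w⟩ ⟨v, hv⟩ := h
        exact h2.reachable
    exact ⟨fun x y => (key x).symm.trans (key y)⟩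
  · intro w₁ w₂ hw
    rw [Set.disjoint_left]
    intro x hx hy
    exact hw (Option.some.inj (hx.symm.trans hy))
  · intro w₁ w₂ hw
    obtain ⟨v₁, v₂, h1, h2, h3⟩ := ha w₁ w₂ hw
    exact ⟨v₁, h1, v₂, h2, h3⟩

lemma isMinor_of_le {V : Type*} {H G : SimpleGraph V} (h : H ≤ G) : IsMinor H G :=
  isMinor_of_stars some id (fun _ => rfl) (fun _ _ hvw => Or.inl (Option.some.inj hvw))
    (fun w₁ w₂ hw => ⟨w₁, w₂, rfl, rfl, h hw⟩)

/-- Bad edges lift along minors. -/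
lemma HasBadEdge.of_minor {W V : Type*} {H : SimpleGraph W} {G : SimpleGraph V}
    (hm : IsMinor H G) (hb : HasBadEdge H) : HasBadEdge G := by
  classical
  obtain ⟨x, y, hxy, hdel, hcon⟩ := hb
  obtain ⟨B, Bne, Bc, Bd, Ba⟩ := hm
  obtain ⟨a, hax, b, hby, hab⟩ := Ba hxy
  have uniq : ∀ {v w₁ w₂}, v ∈ B w₁ → v ∈ B w₂ → w₁ = w₂ := by
    intro v w₁ w₂ h1 h2
    by_contra hne
    exact Set.disjoint_left.1 (Bd hne) h1 h2
  have hne : x ≠ y := hxy.ne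
  refine ⟨a, b, hab, fun hpl => hdel (hpl.of_minor ?_),
    fun hpl => hcon (hpl.of_minor ?_)⟩
  · refine ⟨B, Bne, ?_, Bd, ?_⟩
    · intro w
      refine induce_connected_congr ?_ (Bc w)
      intro p hp q hq hpq
      rw [deleteEdges_adj]
      refine ⟨hpq, ?_⟩
      rw [Set.mem_singleton_iff, Sym2.eq_iff]
      rintro (⟨rfl, rfl⟩ | ⟨rfl, rfl⟩)
      · exact hne ((uniq hax hp).trans (uniq hq hby))
      · exact hne ((uniq hax hq).trans (uniq hp hby))
    · intro w₁ w₂ hw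
      rw [deleteEdges_adj, Set.mem_singleton_iff, Sym2.eq_iff] at hw
      obtain ⟨p, hp, q, hq, hpq⟩ := Ba hw.1
      refine ⟨p, hp, q, hq, ?_⟩
      rw [deleteEdges_adj, Set.mem_singleton_iff, Sym2.eq_iff]
      refine ⟨hpq, ?_⟩
      rintro (⟨rfl, rfl⟩ | ⟨rfl, rfl⟩)
      · exact hw.2 (Or.inl ⟨uniq hp hax, uniq hq hby⟩)
      · exact hw.2 (Or.inr ⟨uniq hp hby, uniq hq hax⟩)
  · -- the branch sets of `H / xy` in `G / ab`
    have cadj : ∀ {p q}, G.Adj p q → p ≠ b → q ≠ b → (contractEdge G a b).Adj p q := by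
      intro p q h hp hq
      exact (fromRel_adj _ _ _).2 ⟨h.ne, Or.inl ⟨hp, hq, Or.inl h⟩⟩
    have cadj' : ∀ {q}, G.Adj b q → q ≠ a → (contractEdge G a b).Adj a q := by
      intro q h hq
      exact (fromRel_adj _ _ _).2
        ⟨hq.symm, Or.inl ⟨hab.ne, h.ne.symm, Or.inr (Or.inl ⟨rfl, h⟩)⟩⟩
    set S : Set V := (B x ∪ B y) \ {b} with hS
    have haS : a ∈ S := ⟨Or.inl hax, hab.ne⟩
    let C : W → Set V := fun w => if w = y then {b} else if w = x then S else B w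
    have Cy : C y = {b} := if_pos rfl
    have Cx : C x = S := by simp [C, hne]
    have Co : ∀ w, w ≠ x → w ≠ y → C w = B w := by
      intro w h1 h2
      simp [C, h1, h2]
    -- every element of `C w`, `w ≠ y`, differs from `b`
    have notb : ∀ w, w ≠ y → ∀ v ∈ C w, v ≠ b := by
      intro w hw v hv
      by_cases hx : w = x
      · subst hx
        rw [Cx] at hv
        exact hv.2
      · rw [Co w hx hw] at hv
        rintro rfl
        exact hw (uniq hv hby)
    have disj : ∀ w, w ≠ x → ∀ v, v ∈ C w → v ∈ C x → False := by
      intro w hwx v hv hvx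
      rw [Cx] at hvx
      by_cases hwy : w = y
      · subst hwy
        rw [Cy] at hv
        exact hvx.2 hv
      · rw [Co w hwx hwy] at hv
        rcases hvx.1 with h | h
        · exact hwx (uniq hv h)
        · exact hwy (uniq hv h)
    refine ⟨C, ?_, ?_, ?_, ?_⟩
    · intro w
      by_cases hwy : w = y
      · subst hwy
        rw [Cy]
        exact ⟨b, rfl⟩
      by_cases hwx : w = x
      · subst hwx
        rw [Cx]
        exact ⟨a, haS⟩
      rw [Co w hwx hwy]
      exact Bne w
    · intro w
      by_cases hwy : w = y
      · subst hwy
        rw [Cy]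
        have : Nonempty ({b} : Set V) := ⟨⟨b, rfl⟩⟩
        refine ⟨fun p q => ?_⟩
        rw [Subsingleton.elim p q]
      by_cases hwx : w = x
      · subst hwx
        rw [Cx]
        have hc : (G.induce (B w ∪ B y)).Preconnected := by
          have pre : ∀ p : (B w ∪ B y : Set V),
              (G.induce (B w ∪ B y)).Reachable ⟨a, Or.inl hax⟩ p := by
            rintro ⟨p, hp | hp⟩
            · exact reachable_induce_mono Set.subset_union_left hax hp ((Bc w).preconnected _ _)
            · have e : (G.induce (B w ∪ B y)).Adj ⟨a, Or.inl hax⟩ ⟨b, Or.inr hby⟩ := hab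
              exact e.reachable.trans
                (reachable_induce_mono Set.subset_union_right hby hp ((Bc y).preconnected _ _))
          exact fun p q => (pre p).symm.trans (pre q)
        let φ : (B w ∪ B y : Set V) → S := fun p =>
          if h : p.1 = b then ⟨a, haS⟩ else ⟨p.1, p.2, h⟩
        have φb : ∀ p : (B w ∪ B y : Set V), p.1 = b → φ p = ⟨a, haS⟩ := fun p h => dif_pos h
        have φo : ∀ (p : (B w ∪ B y : Set V)) (h : p.1 ≠ b), φ p = ⟨p.1, p.2, h⟩ :=
          fun p h => dif_neg h
        have hstep : ∀ p q : (B w ∪ B y : Set V), p.1 = b → G.Adj p.1 q.1 →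
            ((contractEdge G a b).induce S).Reachable (φ p) (φ q) := by
          intro p q hp hpq
          have hq : q.1 ≠ b := fun h => hpq.ne (hp.trans h.symm)
          rw [φb p hp, φo q hq]
          rw [hp] at hpq
          by_cases hqa : q.1 = a
          · have : (⟨q.1, q.2, hq⟩ : S) = ⟨a, haS⟩ := Subtype.ext hqa
            rw [this]
          · have e : ((contractEdge G a b).induce S).Adj ⟨a, haS⟩ ⟨q.1, q.2, hq⟩ :=
              cadj' hpq hqa
            exact e.reachable
        have : Nonempty S := ⟨⟨a, haS⟩⟩
        refine ⟨?_⟩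
        rintro ⟨p, hp⟩ ⟨q, hq⟩
        have e := reachable_map_of_adj (K := (contractEdge G a b).induce S) φ (by
          intro p q hpq
          by_cases hp : p.1 = b
          · exact hstep p q hp hpq
          by_cases hq : q.1 = b
          · exact (hstep q p hq hpq.symm).symm
          rw [φo p hp, φo q hq]
          have e : ((contractEdge G a b).induce S).Adj ⟨p.1, p.2, hp⟩ ⟨q.1, q.2, hq⟩ :=
            cadj hpq hp hq
          exact e.reachable) (hc ⟨p, hp.1⟩ ⟨q, hq.1⟩)
        rw [φo ⟨p, hp.1⟩ hp.2, φo ⟨q, hq.1⟩ hq.2] at e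
        exact e
      · have hw := notb w hwy
        rw [Co w hwx hwy] at hw ⊢
        exact induce_connected_congr (fun p hp q hq h => cadj h (hw p hp) (hw q hq)) (Bc w)
    · intro w₁ w₂ hw
      rw [Set.disjoint_left]
      intro v h1 h2
      by_cases h1x : w₁ = x
      · subst h1x
        exact disj w₂ hw.symm v h2 h1
      by_cases h2x : w₂ = x
      · subst h2x
        exact disj w₁ hw v h1 h2
      by_cases h1y : w₁ = y
      · subst h1y
        rw [Cy] at h1
        exact notb w₂ hw.symm v h2 h1
      by_cases h2y : w₂ = y
      · subst h2y
        rw [Cy] at h2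
        exact notb w₁ hw v h1 h2
      rw [Co _ h1x h1y] at h1
      rw [Co _ h2x h2y] at h2
      exact hw (uniq h1 h2)
    · -- edges from `x` to other vertices
      have edge_x : ∀ w, w ≠ x → w ≠ y → (H.Adj x w ∨ H.Adj y w) →
          ∃ p ∈ C x, ∃ q ∈ C w, (contractEdge G a b).Adj p q := by
        intro w hwx hwy h
        have : ∃ p ∈ B x ∪ B y, ∃ q ∈ B w, G.Adj p q := by
          rcases h with h | h
          · obtain ⟨p, hp, q, hq, e⟩ := Ba h
            exact ⟨p, Or.inl hp, q, hq, e⟩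
          · obtain ⟨p, hp, q, hq, e⟩ := Ba h
            exact ⟨p, Or.inr hp, q, hq, e⟩
        obtain ⟨p, hp, q, hq, e⟩ := this
        have hq' : q ∈ C w := by rwa [Co w hwx hwy]
        rw [Cx]
        by_cases hpb : p = b
        · subst hpb
          refine ⟨a, haS, q, hq', cadj' e ?_⟩
          rintro rfl
          exact hwx (uniq hq hax)
        · exact ⟨p, ⟨hp, hpb⟩, q, hq', cadj e hpb (notb w hwy q hq')⟩
      have main : ∀ w₁ w₂, w₁ ≠ w₂ → w₁ ≠ y ∧ w₂ ≠ y ∧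
          (H.Adj w₁ w₂ ∨ (w₁ = x ∧ H.Adj y w₂) ∨ (w₂ = x ∧ H.Adj w₁ y)) →
          ∃ p ∈ C w₁, ∃ q ∈ C w₂, (contractEdge G a b).Adj p q := by
        rintro w₁ w₂ hw ⟨h1, h2, h⟩
        by_cases h1x : w₁ = x
        · subst h1x
          refine edge_x w₂ hw.symm h2 ?_
          rcases h with h | ⟨_, h⟩ | ⟨h, _⟩
          · exact Or.inl h
          · exact Or.inr h
          · exact absurd h.symm hw
        by_cases h2x : w₂ = x
        · subst h2x
          have : ∃ p ∈ C w₂, ∃ q ∈ C w₁, (contractEdge G a b).Adj p q := by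
            refine edge_x w₁ hw h1 ?_
            rcases h with h | ⟨h, _⟩ | ⟨_, h⟩
            · exact Or.inl h.symm
            · exact absurd h hw
            · exact Or.inr h.symm
          obtain ⟨p, hp, q, hq, e⟩ := this
          exact ⟨q, hq, p, hp, e.symm⟩
        rcases h with h | ⟨h, _⟩ | ⟨h, _⟩
        · obtain ⟨p, hp, q, hq, e⟩ := Ba h
          rw [← Co w₁ h1x h1] at hp
          rw [← Co w₂ h2x h2] at hq
          exact ⟨p, hp, q, hq, cadj e (notb _ h1 _ hp) (notb _ h2 _ hq)⟩
        · exact absurd h h1x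
        · exact absurd h h2x
      intro w₁ w₂ hw
      obtain ⟨hw, h | h⟩ := (fromRel_adj _ _ _).1 hw
      · exact main w₁ w₂ hw h
      · obtain ⟨p, hp, q, hq, e⟩ := main w₂ w₁ hw.symm h
        exact ⟨q, hq, p, hp, e.symm⟩

lemma HasBadEdge.not_planar {V : Type*} {G : SimpleGraph V} (h : HasBadEdge G) : ¬ Planar G := by
  obtain ⟨u, v, _, hdel, _⟩ := h
  exact fun hp => hdel (hp.of_minor (isMinor_of_le (deleteEdges_le _)))

lemma HasBadEdge.not_almostPlanar {V : Type*} {G : SimpleGraph V} (h : HasBadEdge G) :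
    ¬ AlmostPlanar G := by
  obtain ⟨u, v, huv, hdel, hcon⟩ := h
  exact fun hp => (hp.2 huv).elim hdel hcon

lemma not_planar_of_K5 {V : Type*} {G : SimpleGraph V} (h : IsMinor K5 G) : ¬ Planar G :=
  fun hp => hp.1 h

lemma not_planar_of_K33 {V : Type*} {G : SimpleGraph V} (h : IsMinor K33 G) : ¬ Planar G :=
  fun hp => hp.2 h

/-- Deleting an edge at a vertex outside an embedded copy of `F`, or contracting it into the copy,
keeps the copy of `F`. -/
lemma minor_delete_none {U : Type*} {F : SimpleGraph U} {G : SimpleGraph (Option U)}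
    (hF : ∀ a b, F.Adj a b → G.Adj (some a) (some b)) (u : U) :
    IsMinor F (G.deleteEdges {s(some u, none)}) := by
  refine isMinor_of_stars id some (fun _ => rfl) (fun v w h => Or.inl h) ?_
  intro a b hab
  refine ⟨some a, some b, rfl, rfl, ?_⟩
  rw [deleteEdges_adj]
  exact ⟨hF a b hab, by simp⟩

lemma minor_contract_none {U : Type*} {F : SimpleGraph U} {G : SimpleGraph (Option U)}
    (hF : ∀ a b, F.Adj a b → G.Adj (some a) (some b)) (u : U) :
    IsMinor F (contractEdge G (some u) none) := by
  refine isMinor_of_stars id some (fun _ => rfl) (fun v w h => Or.inl h) ?_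
  intro a b hab
  refine ⟨some a, some b, rfl, rfl, ?_⟩
  exact (fromRel_adj _ _ _).2 ⟨(hF a b hab).ne, Or.inl ⟨by simp, by simp, Or.inl (hF a b hab)⟩⟩

lemma K33_sub_EX1 : ∀ a b, K33.Adj a b → EX1.Adj (some a) (some b) := by
  rintro (a | a) (b | b) h <;> simp_all [K33, EX1]

lemma K33_sub_EX8 : ∀ a b, K33.Adj a b → EX8.Adj (some a) (some b) := by
  rintro (a | a) (b | b) h <;> simp_all [K33, EX8]

lemma K5_sub_EX2 : ∀ a b, K5.Adj a b → EX2.Adj (some a) (some b) := by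
  intro a b h
  simp_all [K5, EX2]

lemma badEdge_EX1 : HasBadEdge EX1 :=
  ⟨some (Sum.inl 0), none, by simp [EX1], not_planar_of_K33 (minor_delete_none K33_sub_EX1 _),
    not_planar_of_K33 (minor_contract_none K33_sub_EX1 _)⟩

lemma badEdge_EX8 : HasBadEdge EX8 :=
  ⟨some (Sum.inl 0), none, by simp [EX8], not_planar_of_K33 (minor_delete_none K33_sub_EX8 _),
    not_planar_of_K33 (minor_contract_none K33_sub_EX8 _)⟩

lemma badEdge_EX2 : HasBadEdge EX2 :=
  ⟨some 0, none, by simp [EX2], not_planar_of_K5 (minor_delete_none K5_sub_EX2 _),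
    not_planar_of_K5 (minor_contract_none K5_sub_EX2 _)⟩

instance decAdjK5 : DecidableRel K5.Adj := fun a b => inferInstanceAs (Decidable (a ≠ b))

instance decAdjK33 : DecidableRel K33.Adj := fun a b =>
  inferInstanceAs (Decidable ((a.isLeft ∧ b.isRight) ∨ (a.isRight ∧ b.isLeft)))

instance decFromRel {V : Type*} [DecidableEq V] (r : V → V → Prop) [DecidableRel r] :
    DecidableRel (SimpleGraph.fromRel r).Adj := fun a b =>
  decidable_of_iff (a ≠ b ∧ (r a b ∨ r b a)) (fromRel_adj r a b).symm

instance decContract {V : Type*} [DecidableEq V] (G : SimpleGraph V) [DecidableRel G.Adj]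
    (u w : V) : DecidableRel (contractEdge G u w).Adj :=
  @decFromRel _ _ _ (fun a b => inferInstanceAs (Decidable
    (a ≠ w ∧ b ≠ w ∧ (G.Adj a b ∨ (a = u ∧ G.Adj w b) ∨ (b = u ∧ G.Adj a w)))))

instance decDelete {V : Type*} [DecidableEq V] (G : SimpleGraph V) [DecidableRel G.Adj]
    (u w : V) : DecidableRel (G.deleteEdges {s(u, w)}).Adj := fun a b =>
  decidable_of_iff (G.Adj a b ∧ ¬ ((a = u ∧ b = w) ∨ (a = w ∧ b = u)))
    (by rw [deleteEdges_adj, Set.mem_singleton_iff, Sym2.eq_iff])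

instance decK5h : DecidableRel K5h.Adj :=
  @decFromRel _ _ _ (by
    rintro (a | a) (b | b) <;> dsimp only <;> infer_instance)

instance decK33h : DecidableRel K33h.Adj :=
  @decFromRel _ _ _ (by
    rintro ((a | a) | a) ((b | b) | b) <;> dsimp only <;> infer_instance)

/-- Branch sets for the deletion: both subdivision vertices go to vertex `0`. -/
def mapK5del : Fin 5 ⊕ Fin 2 → Option (Fin 5)
  | .inl i => some i
  | .inr _ => some 0

/-- Branch sets for the contraction: the merged subdivision vertex goes to vertex `0`. -/
def mapK5con : Fin 5 ⊕ Fin 2 → Option (Fin 5)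
  | .inl i => some i
  | .inr k => if k = 0 then some 0 else none

def mapK33del : (Fin 3 ⊕ Fin 3) ⊕ Fin 2 → Option (Fin 3 ⊕ Fin 3)
  | .inl i => some i
  | .inr _ => some (.inl 0)

def mapK33con : (Fin 3 ⊕ Fin 3) ⊕ Fin 2 → Option (Fin 3 ⊕ Fin 3)
  | .inl i => some i
  | .inr k => if k = 0 then some (.inl 0) else none

set_option maxRecDepth 100000 in
set_option maxHeartbeats 4000000 in
set_option synthInstance.maxHeartbeats 400000 in
set_option synthInstance.maxSize 2000 in
lemma badEdge_K5h : HasBadEdge K5h := by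
  refine ⟨.inr 0, .inr 1, by decide, not_planar_of_K5 ?_, not_planar_of_K5 ?_⟩
  · exact isMinor_of_stars mapK5del Sum.inl (fun _ => rfl) (by decide) (by decide)
  · exact isMinor_of_stars mapK5con Sum.inl (fun _ => rfl) (by decide) (by decide)

set_option maxRecDepth 100000 in
set_option maxHeartbeats 4000000 in
set_option synthInstance.maxHeartbeats 400000 in
set_option synthInstance.maxSize 2000 in
lemma badEdge_K33h : HasBadEdge K33h := by
  refine ⟨.inr 0, .inr 1, by decide, not_planar_of_K33 ?_, not_planar_of_K33 ?_⟩
  · exact isMinor_of_stars mapK33del Sum.inl (fun _ => rfl) (by decide) (by decide)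
  · exact isMinor_of_stars mapK33con Sum.inl (fun _ => rfl) (by decide) (by decide)

end Helpers

/-- Every almost-planar graph is {EX1, EX2, K33h, K5h, EX8}-free; each of the five
graphs has an edge whose deletion and contraction are both nonplanar, so none of
them is planar or almost-planar. -/
theorem stmt2 :
    (∀ (V : Type) [Fintype V] (G : SimpleGraph V), AlmostPlanar G →
      ¬ IsMinor EX1 G ∧ ¬ IsMinor EX2 G ∧ ¬ IsMinor K33h G ∧
      ¬ IsMinor K5h G ∧ ¬ IsMinor EX8 G) ∧
    (HasBadEdge EX1 ∧ HasBadEdge EX2 ∧ HasBadEdge K33h ∧ HasBadEdge K5h ∧ HasBadEdge EX8) ∧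
    (¬ (Planar EX1 ∨ AlmostPlanar EX1) ∧ ¬ (Planar EX2 ∨ AlmostPlanar EX2) ∧
     ¬ (Planar K33h ∨ AlmostPlanar K33h) ∧ ¬ (Planar K5h ∨ AlmostPlanar K5h) ∧
     ¬ (Planar EX8 ∨ AlmostPlanar EX8)) := by
  refine ⟨?_, ⟨badEdge_EX1, badEdge_EX2, badEdge_K33h, badEdge_K5h, badEdge_EX8⟩, ?_⟩
  · intro V _ G hG
    exact ⟨fun h => (badEdge_EX1.of_minor h).not_almostPlanar hG,
      fun h => (badEdge_EX2.of_minor h).not_almostPlanar hG,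
      fun h => (badEdge_K33h.of_minor h).not_almostPlanar hG,
      fun h => (badEdge_K5h.of_minor h).not_almostPlanar hG,
      fun h => (badEdge_EX8.of_minor h).not_almostPlanar hG⟩
  · exact ⟨fun h => h.elim badEdge_EX1.not_planar badEdge_EX1.not_almostPlanar,
      fun h => h.elim badEdge_EX2.not_planar badEdge_EX2.not_almostPlanar,
      fun h => h.elim badEdge_K33h.not_planar badEdge_K33h.not_almostPlanar,
      fun h => h.elim badEdge_K5h.not_planar badEdge_K5h.not_almostPlanar,
      fun h => h.elim badEdge_EX8.not_planar badEdge_EX8.not_almostPlanar⟩
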